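/- Let m ≥ 9 and let A ≥ 1 and B ∈ {-1, 0, 1, 2, 3, 4, 5, 6} be integers. Then there exist integers x₁,…,x₅ with P_m(x₁) + P_m(x₂) + P_m(x₃) + P_m(x₄) + 2P_m(x₅) = A(m-2) + B (whenever A(m-2)+B > 0). -/

import Mathlib

/-- The generalized `m`-gonal number `P_m(x) = ((m-2)x² - (m-4)x)/2`. -/
def polygonal (m x : ℤ) : ℤ := ((m - 2) * x ^ 2 - (m - 4) * x) / 2

/-!
Since `2 P_m(x) = (m - 2) (x² - x) + 2 x`, a weighted sum of `m`-gonal numbers equals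
`A (m - 2) + B` as soon as the same weighted sums of the `xᵢ` and of the `xᵢ²` are `B` and
`2 A + B`. Fixing `x₅ = t ∈ {0, 1}` leaves four integers with prescribed sum `b = B - 2 t` and
prescribed sum of squares `a = 2 A + B - 2 t²`. Here `a ≡ b` modulo `2` and `b² ≤ 4 a`, and `t` can
be chosen so that `4 ∤ a`; then Cauchy's lemma applies: `4 a - b²` is a sum `u² + v² + w²`, and once
the sign of `w` is chosen suitably, the four integers are the values of `(b ± u ± v ± w) / 4` with
an even number of minus signs.

The three squares theorem needed here is proved following Dirichlet. When `d n = c + 1` and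
`x² + d = c k`, the form with matrix `!![c, x, 0; x, k, 1; 0, 1, n]` is positive definite of
determinant `1`. By Hermite's bound on the minimum of a form, it is equivalent to a sum of three
squares, and it represents `n`. Primes in arithmetic progressions and quadratic reciprocity provide
`d`, `c` and `x`.
-/

open Matrix
open scoped NumberTheorySymbols

/-! ### Proper equivalence of quadratic forms -/

section ProperlyEquivalent

variable {ι R : Type*} [Fintype ι] [DecidableEq ι] [CommRing R]

/-- Proper equivalence of quadratic forms, expressed through their Gram matrices: `N` arises from
`M` by a change of basis of determinant `1`. -/
def ProperlyEquivalent (M N : Matrix ι ι R) : Prop :=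
  ∃ V : Matrix ι ι R, V.det = 1 ∧ N = Vᵀ * M * V

namespace ProperlyEquivalent

variable {M N P : Matrix ι ι R}

lemma refl (M : Matrix ι ι R) : ProperlyEquivalent M M := ⟨1, by simp⟩

lemma trans : ProperlyEquivalent M N → ProperlyEquivalent N P → ProperlyEquivalent M P := by
  rintro ⟨V, hV, rfl⟩ ⟨W, hW, rfl⟩
  exact ⟨V * W, by rw [det_mul, hV, hW, one_mul], by simp only [transpose_mul, Matrix.mul_assoc]⟩

lemma det_eq : ProperlyEquivalent M N → N.det = M.det := by
  rintro ⟨V, hV, rfl⟩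
  rw [det_mul, det_mul, det_transpose, hV, one_mul, mul_one]

lemma posDef {M N : Matrix ι ι ℤ} (hM : M.PosDef) : ProperlyEquivalent M N → N.PosDef := by
  rintro ⟨V, hV, rfl⟩
  rw [← conjTranspose_eq_transpose_of_trivial]
  exact hM.conjTranspose_mul_mul_same (mulVec_injective_of_isUnit <|
    (isUnit_iff_isUnit_det V).2 (hV ▸ isUnit_one))

lemma exists_transpose_mul_self_eq :
    ProperlyEquivalent M N → (∃ U : Matrix ι ι R, Uᵀ * U = N) →
      ∃ U : Matrix ι ι R, Uᵀ * U = M := by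
  rintro ⟨V, hV, rfl⟩ ⟨U, hU⟩
  have hVV : V * V.adjugate = 1 := by rw [mul_adjugate, hV, one_smul]
  refine ⟨U * V.adjugate, ?_⟩
  calc (U * V.adjugate)ᵀ * (U * V.adjugate) = V.adjugateᵀ * (Uᵀ * U) * V.adjugate := by
        simp only [transpose_mul, Matrix.mul_assoc]
    _ = (V * V.adjugate)ᵀ * M * (V * V.adjugate) := by
        rw [hU]; simp only [transpose_mul, Matrix.mul_assoc]
    _ = M := by rw [hVV, transpose_one, one_mul, mul_one]

end ProperlyEquivalent

end ProperlyEquivalent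

/-! ### Completing the square -/

section ScaledSchur

variable {R : Type*} [CommRing R] {n : ℕ}

/-- The Schur complement of the top left entry of a matrix, multiplied by that entry so that no
division is needed. For a symmetric matrix it is the Gram matrix of the form that remains after
completing the square in the first variable. -/
def scaledSchur (M : Matrix (Fin (n + 1)) (Fin (n + 1)) R) : Matrix (Fin n) (Fin n) R :=
  of fun i j ↦ M 0 0 * M i.succ j.succ - M i.succ 0 * M 0 j.succ

lemma mul_det_scaledSchur (M : Matrix (Fin (n + 1)) (Fin (n + 1)) R) :
    M 0 0 * (scaledSchur M).det = M 0 0 ^ n * M.det := by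
  -- `A` is `M` after multiplying every row but the first by `M 0 0` and clearing the first column.
  let v : Fin (n + 1) → R := Fin.cons 1 fun _ ↦ M 0 0
  let c : Fin (n + 1) → R := Fin.cons 0 fun i ↦ -M i.succ 0
  let A : Matrix (Fin (n + 1)) (Fin (n + 1)) R := of fun i j ↦ v i * M i j + c i * M 0 j
  have hA : A.det = M 0 0 ^ n * M.det := by
    rw [det_eq_of_forall_row_eq_smul_add_const (B := of fun i j ↦ v i * M i j) c 0 rfl
      (by intro i j; simp [A, v]), det_mul_column, Fin.prod_univ_succ]
    simp [v]
  have hminor : A.submatrix (Fin.succAbove 0) Fin.succ = scaledSchur M := by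
    ext i j
    simp only [A, v, c, scaledSchur, submatrix_apply, of_apply, Fin.zero_succAbove, Fin.cons_succ]
    ring
  rw [← hA, det_succ_column_zero, Fin.sum_univ_succ, Finset.sum_eq_zero, hminor]
  · simp [A, v, c]
  · intro i _
    simp [A, v, c, mul_comm]

lemma mul_dotProduct_mulVec_vecCons {M : Matrix (Fin (n + 1)) (Fin (n + 1)) R} (hM : M.IsSymm)
    (t : R) (y : Fin n → R) :
    M 0 0 * (vecCons t y ⬝ᵥ M *ᵥ vecCons t y) =
      (M 0 0 * t + ∑ j, M 0 j.succ * y j) ^ 2 + y ⬝ᵥ scaledSchur M *ᵥ y := by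
  have hrow : ∑ i, y i * M i.succ 0 = ∑ j, M 0 j.succ * y j :=
    Finset.sum_congr rfl fun i _ ↦ by rw [hM.apply, mul_comm]
  have hSchur : y ⬝ᵥ scaledSchur M *ᵥ y =
      M 0 0 * ∑ i, y i * ∑ j, M i.succ j.succ * y j
        - (∑ i, y i * M i.succ 0) * ∑ j, M 0 j.succ * y j := by
    rw [Finset.sum_mul_sum]
    simp only [dotProduct, mulVec, scaledSchur, of_apply, Finset.mul_sum, ← Finset.sum_sub_distrib]
    exact Finset.sum_congr rfl fun i _ ↦ Finset.sum_congr rfl fun j _ ↦ by ring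
  have hcross : ∑ i, y i * (M i.succ 0 * t) = t * ∑ i, y i * M i.succ 0 := by
    rw [Finset.mul_sum]
    exact Finset.sum_congr rfl fun i _ ↦ by ring
  rw [hSchur]
  simp only [dotProduct, mulVec, Fin.sum_univ_succ, cons_val_zero, cons_val_succ, mul_add,
    Finset.sum_add_distrib, hcross, hrow]
  ring

lemma posDef_scaledSchur {M : Matrix (Fin (n + 1)) (Fin (n + 1)) ℤ} (hM : M.PosDef) :
    (scaledSchur M).PosDef := by
  have hsymm : M.IsSymm := by simpa using hM.isHermitian
  have hcorner : 0 < M 0 0 := hM.diag_pos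
  refine PosDef.of_dotProduct_mulVec_pos ?_ fun y hy ↦ ?_
  · ext i j
    simp only [scaledSchur, conjTranspose_apply, of_apply, star_trivial, hsymm.apply]
    ring
  · let x := vecCons (-∑ j, M 0 j.succ * y j) (M 0 0 • y)
    have hx : x ≠ 0 := fun hx ↦ smul_ne_zero hcorner.ne' hy (cons_eq_zero_iff.1 hx).2
    have hquad : M 0 0 * (x ⬝ᵥ M *ᵥ x) = M 0 0 ^ 2 * (y ⬝ᵥ scaledSchur M *ᵥ y) := by
      have hsum : ∑ j, M 0 j.succ * (M 0 0 • y) j = M 0 0 * ∑ j, M 0 j.succ * y j := by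
        simp only [Pi.smul_apply, smul_eq_mul, Finset.mul_sum, mul_left_comm]
      rw [mul_dotProduct_mulVec_vecCons hsymm, mulVec_smul, smul_dotProduct, dotProduct_smul, hsum,
        smul_eq_mul, smul_eq_mul]
      ring
    have hpos := mul_pos hcorner (hM.dotProduct_mulVec_pos hx)
    simp only [star_trivial, hquad] at hpos ⊢
    exact pos_of_mul_pos_right hpos (sq_nonneg _)

lemma ProperlyEquivalent.of_scaledSchur {M : Matrix (Fin (n + 1)) (Fin (n + 1)) R}
    {P : Matrix (Fin n) (Fin n) R} (h : ProperlyEquivalent (scaledSchur M) P) :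
    ∃ N, ProperlyEquivalent M N ∧ N 0 0 = M 0 0 ∧ scaledSchur N = P := by
  obtain ⟨V, hV, rfl⟩ := h
  let E : Matrix (Fin (n + 1)) (Fin (n + 1)) R :=
    of (Fin.cons (Fin.cons 1 0) fun i ↦ Fin.cons 0 (V i))
  have hE : E.det = 1 := by
    have : E.submatrix Fin.succ Fin.succ = V := by ext i j; simp [E]
    simp [det_succ_row_zero, Fin.sum_univ_succ, this, hV, E]
  refine ⟨Eᵀ * M * E, ⟨E, hE, rfl⟩, ?_, ?_⟩
  · simp [mul_apply, Fin.sum_univ_succ, E]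
  · ext i j
    suffices M 0 0 * ∑ l, (∑ k, V k i * M k.succ l.succ) * V l j -
        (∑ l, M 0 l.succ * V l j) * ∑ k, V k i * M k.succ 0 =
          ∑ l, (∑ k, V k i * (M 0 0 * M k.succ l.succ - M k.succ 0 * M 0 l.succ)) * V l j by
      simpa [scaledSchur, mul_apply, Fin.sum_univ_succ, E, mul_comm (∑ l, M 0 l.succ * V l j)]
    rw [Finset.sum_mul_sum]
    simp only [Finset.mul_sum, Finset.sum_mul, ← Finset.sum_sub_distrib]
    exact Finset.sum_congr rfl fun l _ ↦ Finset.sum_congr rfl fun k _ ↦ by ring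

lemma exists_properlyEquivalent_mul_corner_eq {M : Matrix (Fin (n + 2)) (Fin (n + 2)) R}
    (hM : M.IsSymm) (k : R) :
    ∃ N, ProperlyEquivalent M N ∧
      M 0 0 * N 0 0 = (M 0 0 * k + M 0 1) ^ 2 + scaledSchur M 0 0 := by
  let V : Matrix (Fin (n + 2)) (Fin (n + 2)) R := transvection 0 1 (k - 1) * transvection 1 0 1
  have hV : V.det = 1 := by simp [V, det_transvection_of_ne]
  have hcol : V.col 0 = vecCons k (Pi.single 0 1) := by
    ext i
    simp only [V, col_apply, mul_transvection_apply_same]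
    refine Fin.cases ?_ (Fin.cases ?_ fun i ↦ ?_) i <;>
      simp [transvection, single, one_apply, Fin.ext_iff]
  refine ⟨Vᵀ * M * V, ⟨V, hV, rfl⟩, ?_⟩
  have hcorner : (Vᵀ * M * V) 0 0 = V.col 0 ⬝ᵥ M *ᵥ V.col 0 := by
    rw [Matrix.mul_assoc]
    rfl
  rw [hcorner, hcol, mul_dotProduct_mulVec_vecCons hM]
  simp [Pi.single_apply]

end ScaledSchur

/-! ### Hermite's bound and unimodular forms -/

section Hermite

variable {n : ℕ}

lemma exists_properlyEquivalent_corner_minimal {M : Matrix (Fin (n + 1)) (Fin (n + 1)) ℤ}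
    (hM : M.PosDef) :
    ∃ N, ProperlyEquivalent M N ∧ ∀ P, ProperlyEquivalent N P → N 0 0 ≤ P 0 0 := by
  obtain ⟨N, hN, hmin⟩ := (measure fun N : Matrix (Fin (n + 1)) (Fin (n + 1)) ℤ ↦
    (N 0 0).toNat).wf.has_min {N | ProperlyEquivalent M N} ⟨M, .refl M⟩
  refine ⟨N, hN, fun P hP ↦ ?_⟩
  have hle : (N 0 0).toNat ≤ (P 0 0).toNat := not_lt.1 (hmin P (hN.trans hP))
  have hpos : 0 < P 0 0 := ((hN.trans hP).posDef hM).diag_pos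
  omega

lemma exists_four_mul_sq_le {a : ℤ} (ha : 0 < a) (b : ℤ) : ∃ k, 4 * (a * k + b) ^ 2 ≤ a ^ 2 := by
  lift a to ℕ using ha.le
  have hlow := Int.le_bmod (x := b) (m := a) (by omega)
  have hupp := Int.bmod_lt (x := b) (m := a) (by omega)
  have habs : |2 * b.bmod a| ≤ a := abs_le.2 ⟨by omega, by omega⟩
  have hrem : a * -b.bdiv a + b = b.bmod a := by linarith [Int.bdiv_add_bmod b a]
  refine ⟨-b.bdiv a, ?_⟩
  calc 4 * (a * -b.bdiv a + b) ^ 2 = |2 * b.bmod a| ^ 2 := by rw [hrem, sq_abs]; ring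
    _ ≤ (a : ℤ) ^ 2 := by gcongr

lemma three_mul_corner_sq_le {M : Matrix (Fin (n + 2)) (Fin (n + 2)) ℤ} (hM : M.PosDef)
    (hmin : ∀ P, ProperlyEquivalent M P → M 0 0 ≤ P 0 0) :
    3 * M 0 0 ^ 2 ≤ 4 * scaledSchur M 0 0 := by
  have hsymm : M.IsSymm := by simpa using hM.isHermitian
  have hcorner : 0 < M 0 0 := hM.diag_pos
  obtain ⟨k, hk⟩ := exists_four_mul_sq_le hcorner (M 0 1)
  obtain ⟨N, hMN, hN⟩ := exists_properlyEquivalent_mul_corner_eq hsymm k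
  have : M 0 0 ^ 2 ≤ M 0 0 * N 0 0 := by
    rw [sq]
    exact mul_le_mul_of_nonneg_left (hmin N hMN) hcorner.le
  linarith

-- The corner is first minimised; reducing the Schur complement afterwards does not change it.
theorem hermite_inequality : ∀ {n : ℕ} {M : Matrix (Fin (n + 1)) (Fin (n + 1)) ℤ}, M.PosDef →
    ∃ N, ProperlyEquivalent M N ∧
      3 ^ (n + 1).choose 2 * N 0 0 ^ (n + 1) ≤ 4 ^ (n + 1).choose 2 * M.det
  | 0, M, _ => ⟨M, .refl M, by simp⟩
  | n + 1, M, hM => by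
    obtain ⟨N, hMN, hmin⟩ := exists_properlyEquivalent_corner_minimal hM
    have hN := hMN.posDef hM
    obtain ⟨S, hNS, hS⟩ := hermite_inequality (posDef_scaledSchur hN)
    obtain ⟨P, hNP, hcorner, rfl⟩ := hNS.of_scaledSchur
    have hP : P.PosDef := hNP.posDef hN
    have hpos : 0 < P 0 0 := hP.diag_pos
    have hbound := three_mul_corner_sq_le hP fun Q hQ ↦ hcorner ▸ hmin Q (hNP.trans hQ)
    have hdet : (scaledSchur N).det = P 0 0 ^ n * M.det := by
      have := mul_det_scaledSchur N
      rw [← hcorner, pow_succ', mul_assoc, hMN.det_eq] at this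
      exact mul_left_cancel₀ hpos.ne' this
    refine ⟨P, hMN.trans hNP, le_of_mul_le_mul_left ?_ (pow_pos hpos n)⟩
    rw [Nat.choose_succ_succ' (n + 1), Nat.choose_one_right]
    set t := (n + 1).choose 2
    calc P 0 0 ^ n * (3 ^ (n + 1 + t) * P 0 0 ^ (n + 2))
        = 3 ^ t * (3 * P 0 0 ^ 2) ^ (n + 1) := by ring
      _ ≤ 3 ^ t * (4 * scaledSchur P 0 0) ^ (n + 1) := by gcongr
      _ = 4 ^ (n + 1) * (3 ^ t * scaledSchur P 0 0 ^ (n + 1)) := by ring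
      _ ≤ 4 ^ (n + 1) * (4 ^ t * (scaledSchur N).det) := by gcongr
      _ = P 0 0 ^ n * (4 ^ (n + 1 + t) * M.det) := by rw [hdet]; ring

lemma exists_properlyEquivalent_corner_eq_one (hn : n ≤ 4)
    {M : Matrix (Fin (n + 1)) (Fin (n + 1)) ℤ} (hM : M.PosDef) (hdet : M.det = 1) :
    ∃ N, ProperlyEquivalent M N ∧ N 0 0 = 1 := by
  obtain ⟨N, hMN, hN⟩ := hermite_inequality hM
  have hpos : 0 < N 0 0 := (hMN.posDef hM).diag_pos
  refine ⟨N, hMN, by_contra fun hne ↦ hN.not_gt ?_⟩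
  have htwo : 2 ≤ N 0 0 := by omega
  calc 4 ^ (n + 1).choose 2 * M.det = 4 ^ (n + 1).choose 2 := by rw [hdet, mul_one]
    _ < 3 ^ (n + 1).choose 2 * 2 ^ (n + 1) := by interval_cases n <;> decide
    _ ≤ 3 ^ (n + 1).choose 2 * N 0 0 ^ (n + 1) := by gcongr

theorem exists_transpose_mul_self_eq_of_det_eq_one : ∀ {n : ℕ}, n ≤ 5 →
    ∀ {M : Matrix (Fin n) (Fin n) ℤ}, M.PosDef → M.det = 1 →
      ∃ U : Matrix (Fin n) (Fin n) ℤ, Uᵀ * U = M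
  | 0, _, _, _, _ => ⟨1, Subsingleton.elim _ _⟩
  | n + 1, hn, M, hM, hdet => by
    obtain ⟨N, hMN, hcorner⟩ := exists_properlyEquivalent_corner_eq_one (by omega) hM hdet
    have hN := hMN.posDef hM
    have hsymm : N.IsSymm := by simpa using hN.isHermitian
    have hS : (scaledSchur N).det = 1 := by
      simpa [hcorner, hMN.det_eq, hdet] using mul_det_scaledSchur N
    obtain ⟨W, hW⟩ :=
      exists_transpose_mul_self_eq_of_det_eq_one (by omega) (posDef_scaledSchur hN) hS
    have hWN (i j) : ∑ k, W k i * W k j = N i.succ j.succ - N 0 i.succ * N 0 j.succ := by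
      simpa [mul_apply, scaledSchur, hcorner, hsymm.apply] using congr_fun₂ hW i j
    refine hMN.exists_transpose_mul_self_eq ⟨of (Fin.cons (N 0) fun i ↦ Fin.cons 0 (W i)), ?_⟩
    ext i j
    refine Fin.cases ?_ (fun i ↦ ?_) i <;> refine Fin.cases ?_ (fun j ↦ ?_) j <;>
      simp [mul_apply, Fin.sum_univ_succ, hcorner, hsymm.apply, hWN]

end Hermite

/-! ### Sums of three squares -/

lemma posDef_of_sq_add_eq_mul {c d k n x : ℤ} (hd : 0 < d) (hc : 0 < c) (hn : d * n = c + 1)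
    (hk : x ^ 2 + d = c * k) : (!![c, x, 0; x, k, 1; 0, 1, n]).PosDef := by
  refine .of_dotProduct_mulVec_pos ?_ fun y hy ↦ ?_
  · ext i j
    fin_cases i <;> fin_cases j <;> rfl
  · set Q := star y ⬝ᵥ !![c, x, 0; x, k, 1; 0, 1, n] *ᵥ y with hQ
    have hform : Q = c * y 0 ^ 2 + 2 * x * y 0 * y 1 + k * y 1 ^ 2 + 2 * y 1 * y 2
        + n * y 2 ^ 2 := by
      simp only [hQ, dotProduct, mulVec, Fin.sum_univ_three, star_trivial, of_apply, cons_val]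
      ring
    have hsquares : d * c * Q =
        d * (c * y 0 + x * y 1) ^ 2 + (d * y 1 + c * y 2) ^ 2 + c * y 2 ^ 2 := by
      rw [hform]
      linear_combination -d * y 1 ^ 2 * hk + c * y 2 ^ 2 * hn
    contrapose! hy
    have h₀ : 0 ≤ d * (c * y 0 + x * y 1) ^ 2 := by positivity
    have h₁ : 0 ≤ (d * y 1 + c * y 2) ^ 2 := by positivity
    have h₂ : 0 ≤ c * y 2 ^ 2 := by positivity
    have hle : d * c * Q ≤ 0 := mul_nonpos_of_nonneg_of_nonpos (by positivity) hy
    have hy₂ : y 2 = 0 := by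
      have : c * y 2 ^ 2 = 0 := by linarith
      simpa [hc.ne'] using this
    have hy₁ : y 1 = 0 := by
      have : (d * y 1 + c * y 2) ^ 2 = 0 := by linarith
      simpa [hy₂, hd.ne'] using this
    have hy₀ : y 0 = 0 := by
      have : d * (c * y 0 + x * y 1) ^ 2 = 0 := by linarith
      simpa [hy₁, hc.ne', hd.ne'] using this
    ext i
    fin_cases i <;> assumption

theorem exists_sum_three_sq_of_dvd {c d n x : ℤ} (hd : 0 < d) (hc : 0 < c) (hn : d * n = c + 1)
    (hx : c ∣ x ^ 2 + d) : ∃ u v w : ℤ, u ^ 2 + v ^ 2 + w ^ 2 = n := by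
  obtain ⟨k, hk⟩ := hx
  have hdet : (!![c, x, 0; x, k, 1; 0, 1, n]).det = 1 := by
    simp only [det_fin_three, of_apply, cons_val]
    linear_combination hn - n * hk
  obtain ⟨U, hU⟩ := exists_transpose_mul_self_eq_of_det_eq_one (by norm_num)
    (posDef_of_sq_add_eq_mul hd hc hn hk) hdet
  exact ⟨U 0 2, U 1 2, U 2 2,
    by simpa [mul_apply, Fin.sum_univ_three, sq] using congr_fun₂ hU 2 2⟩

lemma exists_dvd_sq_add_of_jacobiSym_neg_eq_one {p : ℕ} [Fact p.Prime] {d : ℤ}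
    (h : J(-d | p) = 1) : ∃ x : ℤ, (p : ℤ) ∣ x ^ 2 + d := by
  obtain ⟨y, hy⟩ := ZMod.isSquare_of_jacobiSym_eq_one h
  obtain ⟨x, rfl⟩ := ZMod.intCast_surjective y
  refine ⟨x, (ZMod.intCast_zmod_eq_zero_iff_dvd _ p).1 ?_⟩
  push_cast at hy ⊢
  linear_combination -hy

lemma exists_two_mul_dvd_sq_add {p d x : ℤ} (hp : Odd p) (hx : p ∣ x ^ 2 + d) :
    ∃ y, 2 * p ∣ y ^ 2 + d := by
  have hcop : IsCoprime 2 p := by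
    obtain ⟨k, rfl⟩ := hp
    exact ⟨-k, 1, by ring⟩
  refine ⟨x + p * (x + d), hcop.mul_dvd ?_ ?_⟩
  · have hp' : ¬ Even p := Int.not_even_iff_odd.2 hp
    rw [← even_iff_two_dvd]
    simp only [hp', Int.even_add, Int.even_mul, Int.even_pow, false_or]
    tauto
  · rw [show (x + p * (x + d)) ^ 2 + d = x ^ 2 + d + p * ((x + d) * (2 * x + p * (x + d))) by ring]
    exact hx.add (dvd_mul_right _ _)

lemma jacobiSym_neg_eq_of_mod_four {d p : ℕ} (hd : Odd d) (hp : Odd p)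
    (h : p % 4 = 1 ∨ d % 4 = 3) : J(-d | p) = J(p | d) := by
  rw [jacobiSym.neg _ hp]
  rcases Nat.odd_mod_four_iff.1 (Nat.odd_iff.1 hp) with hp4 | hp4
  · rw [ZMod.χ₄_nat_one_mod_four hp4, one_mul, jacobiSym.quadratic_reciprocity_one_mod_four' hd hp4]
  · rw [ZMod.χ₄_nat_three_mod_four hp4,
      jacobiSym.quadratic_reciprocity_three_mod_four (by omega) hp4, neg_mul_neg, one_mul]

lemma jacobiSym_neg_two_eq_one {d : ℕ} (h : d % 8 = 1 ∨ d % 8 = 3) : J(-2 | d) = 1 := by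
  rw [jacobiSym.at_neg_two (Nat.odd_iff.2 (by omega)), ZMod.χ₈'_nat_eq_if_mod_eight,
    if_neg (by omega), if_pos h]

lemma exists_prime_eq_mul_add {q a : ℕ} (hq : q ≠ 0) (h : a.Coprime q) :
    ∃ p j, p.Prime ∧ p = q * j + a := by
  obtain ⟨p, hap, hp, hmod⟩ := Nat.forall_exists_prime_gt_and_modEq a hq h
  obtain ⟨j, hj⟩ := (Nat.modEq_iff_dvd' hap.le).1 hmod.symm
  exact ⟨p, j, hp, by omega⟩

lemma exists_sum_three_sq_of_mod_four_eq_two {n : ℕ} (hn : n % 4 = 2) :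
    ∃ u v w : ℤ, u ^ 2 + v ^ 2 + w ^ 2 = n := by
  have hcop₂ : (n - 1).Coprime 2 := (Nat.coprime_two_left.2 (Nat.odd_iff.2 (by omega))).symm
  have hcop : (n - 1).Coprime n :=
    (Nat.coprime_self_sub_left (by omega)).2 (Nat.coprime_one_left n)
  obtain ⟨p, j, hp, hpj⟩ :=
    exists_prime_eq_mul_add (by omega) ((hcop₂.pow_right 2).mul_right hcop)
  have := Fact.mk hp
  have hpd : ((4 * j + 1 : ℕ) : ℤ) * n = p + 1 := by
    zify [show 1 ≤ n by omega] at hpj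
    push_cast
    linear_combination -hpj
  have hp4 : p % 4 = 1 := by rw [hpj, mul_assoc]; omega
  have hd : Odd (4 * j + 1) := ⟨2 * j, by ring⟩
  have hmod : (p : ℤ) ≡ -1 [ZMOD (4 * j + 1 : ℕ)] :=
    Int.modEq_iff_dvd.2 ⟨-n, by linear_combination hpd⟩
  have hJ : J(-(4 * j + 1 : ℕ) | p) = 1 := by
    rw [jacobiSym_neg_eq_of_mod_four hd (Nat.odd_iff.2 (by omega)) (.inl hp4),
      jacobiSym.mod_left' hmod, jacobiSym.at_neg_one hd, ZMod.χ₄_nat_one_mod_four (by omega)]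
  obtain ⟨x, hx⟩ := exists_dvd_sq_add_of_jacobiSym_neg_eq_one hJ
  exact exists_sum_three_sq_of_dvd (by positivity) (mod_cast hp.pos) hpd hx

lemma exists_sum_three_sq_of_mul_eq_two_mul_add_one {n d p : ℕ} (hp : p.Prime) (hp2 : Odd p)
    (hd : d % 8 = 1 ∨ d % 8 = 3) (hpd : p % 4 = 1 ∨ d % 4 = 3) (h : d * n = 2 * p + 1) :
    ∃ u v w : ℤ, u ^ 2 + v ^ 2 + w ^ 2 = n := by
  have := Fact.mk hp
  have hodd : Odd d := Nat.odd_iff.2 (by omega)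
  have hdn : (d * n : ℤ) = 2 * p + 1 := mod_cast h
  have hmod : -2 * (p : ℤ) ≡ 1 [ZMOD d] := Int.modEq_iff_dvd.2 ⟨n, by linear_combination -hdn⟩
  have hmul : J(-2 | d) * J(p | d) = 1 := by
    rw [← jacobiSym.mul_left, jacobiSym.mod_left' hmod, jacobiSym.one_left]
  have hJ : J(-d | p) = 1 := by
    rwa [jacobiSym_neg_two_eq_one hd, one_mul, ← jacobiSym_neg_eq_of_mod_four hodd hp2 hpd] at hmul
  obtain ⟨x, hx⟩ := exists_dvd_sq_add_of_jacobiSym_neg_eq_one hJ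
  obtain ⟨y, hy⟩ := exists_two_mul_dvd_sq_add ((Int.odd_coe_nat p).2 hp2) hx
  exact exists_sum_three_sq_of_dvd (mod_cast hodd.pos) (by simp [hp.pos]) hdn hy

lemma exists_prime_mul_eq_two_mul_add_one {n c : ℕ} (h : c * n % 4 = 3) :
    ∃ p j, p.Prime ∧ (8 * j + c) * n = 2 * p + 1 := by
  obtain ⟨r, hr⟩ : ∃ r, c * n = 2 * r + 1 := ⟨c * n / 2, by omega⟩
  have hrn : r.Coprime n := by
    have : (c * n : ℤ) = 2 * r + 1 := mod_cast hr
    exact Nat.isCoprime_iff_coprime.1 ⟨-2, c, by linear_combination this⟩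
  have hr₂ : r.Coprime 2 := (Nat.coprime_two_left.2 (Nat.odd_iff.2 (by omega))).symm
  have hn : n ≠ 0 := by
    rintro rfl
    omega
  obtain ⟨p, j, hp, hj⟩ := exists_prime_eq_mul_add (by positivity) ((hr₂.pow_right 2).mul_right hrn)
  exact ⟨p, j, hp, by rw [hj, add_mul, hr]; ring⟩

lemma exists_sum_three_sq_of_mul_mod_four_eq_three {n c : ℕ} (hn : c * n % 4 = 3)
    (hc : c % 8 = 1 ∨ c % 8 = 3) (hcn : c * n % 8 = 3 ∨ c % 4 = 3) :
    ∃ u v w : ℤ, u ^ 2 + v ^ 2 + w ^ 2 = n := by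
  obtain ⟨p, j, hp, hj⟩ := exists_prime_mul_eq_two_mul_add_one hn
  have hp' : 8 * (j * n) + c * n = 2 * p + 1 := by rw [← hj]; ring
  exact exists_sum_three_sq_of_mul_eq_two_mul_add_one hp (Nat.odd_iff.2 (by omega)) (by omega)
    (by omega) hj

theorem exists_sum_three_sq {n : ℤ} (hn : 0 ≤ n) (h4 : ¬ 4 ∣ n) (h7 : n % 8 ≠ 7) :
    ∃ u v w : ℤ, u ^ 2 + v ^ 2 + w ^ 2 = n := by
  lift n to ℕ using hn
  obtain h | h | h : n % 4 = 2 ∨ n % 8 = 3 ∨ n % 4 = 1 := by omega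
  · exact exists_sum_three_sq_of_mod_four_eq_two h
  · exact exists_sum_three_sq_of_mul_mod_four_eq_three (c := 1) (by omega) (by omega) (by omega)
  · exact exists_sum_three_sq_of_mul_mod_four_eq_three (c := 3) (by omega) (by omega) (by omega)

/-! ### Cauchy's lemma -/

section Cauchy

variable {a b u v w : ℤ}

lemma sq_emod_four_eq_emod_two (x : ℤ) : x ^ 2 % 4 = x % 2 := by
  rcases Int.even_or_odd' x with ⟨k, rfl | rfl⟩ <;> ring_nf <;> omega

lemma four_dvd_sum_of_even (ha : Even a) (hb : Even b) (hu : Even u) (hv : Even v) (hw : Even w)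
    (h : b ^ 2 + u ^ 2 + v ^ 2 + w ^ 2 = 4 * a) : 4 ∣ b + u + v + w := by
  obtain ⟨b, rfl⟩ := hb
  obtain ⟨u, rfl⟩ := hu
  obtain ⟨v, rfl⟩ := hv
  obtain ⟨w, rfl⟩ := hw
  obtain rfl : a = b ^ 2 + u ^ 2 + v ^ 2 + w ^ 2 := by linarith
  simp only [Int.even_add, Int.even_pow, ne_eq, OfNat.ofNat_ne_zero, not_false_eq_true,
    and_true] at ha
  have : Even (b + u + v + w) := by simpa only [Int.even_add] using ha
  rw [Int.even_iff] at this
  omega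

lemma exists_sum_eq_sum_sq_eq_of_four_dvd (hu : Even (b - u)) (hv : Even (b - v))
    (hsum : 4 ∣ b + u + v + w) (h : b ^ 2 + u ^ 2 + v ^ 2 + w ^ 2 = 4 * a) :
    ∃ x y z t : ℤ, x + y + z + t = b ∧ x ^ 2 + y ^ 2 + z ^ 2 + t ^ 2 = a := by
  obtain ⟨k, hk⟩ := hsum
  obtain ⟨i, hi⟩ := hu
  obtain ⟨j, hj⟩ := hv
  obtain rfl : u = b - 2 * i := by linarith
  obtain rfl : v = b - 2 * j := by linarith
  obtain rfl : w = 4 * k - 3 * b + 2 * i + 2 * j := by linarith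
  exact ⟨k, b - i - k, b - j - k, k - b + i + j, by ring, by linarith⟩

lemma exists_sum_eq_sum_sq_eq (hab : Even (a - b))
    (h : b ^ 2 + u ^ 2 + v ^ 2 + w ^ 2 = 4 * a) :
    ∃ x y z t : ℤ, x + y + z + t = b ∧ x ^ 2 + y ^ 2 + z ^ 2 + t ^ 2 = a := by
  obtain ⟨hu, hv, hw⟩ : Even (b - u) ∧ Even (b - v) ∧ Even (b - w) := by
    have hb := sq_emod_four_eq_emod_two b
    have hu := sq_emod_four_eq_emod_two u
    have hv := sq_emod_four_eq_emod_two v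
    have hw := sq_emod_four_eq_emod_two w
    simp only [Int.even_iff]
    omega
  suffices hsum : 4 ∣ b + u + v + w ∨ 4 ∣ b + u + v + -w by
    rcases hsum with hsum | hsum
    · exact exists_sum_eq_sum_sq_eq_of_four_dvd hu hv hsum h
    · exact exists_sum_eq_sum_sq_eq_of_four_dvd hu hv hsum (by rwa [neg_sq])
  rcases Int.even_or_odd b with hb | hb
  · simp only [Int.even_sub, hb, true_iff, iff_true] at hab hu hv hw
    exact .inl (four_dvd_sum_of_even hab hb hu hv hw h)
  · simp only [Int.even_iff, Int.odd_iff] at hb hu hv hw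
    omega

theorem cauchy_sum_four_sq (hab : Even (a - b)) (ha : ¬ 4 ∣ a) (h : b ^ 2 ≤ 4 * a) :
    ∃ x y z t : ℤ, x + y + z + t = b ∧ x ^ 2 + y ^ 2 + z ^ 2 + t ^ 2 = a := by
  obtain ⟨u, v, w, huvw⟩ : ∃ u v w : ℤ, u ^ 2 + v ^ 2 + w ^ 2 = 4 * a - b ^ 2 := by
    rw [Int.even_iff] at hab
    rcases Int.even_or_odd' b with ⟨s, rfl | rfl⟩
    · have hs := sq_emod_four_eq_emod_two s
      obtain ⟨u, v, w, huvw⟩ : ∃ u v w : ℤ, u ^ 2 + v ^ 2 + w ^ 2 = a - s ^ 2 :=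
        exists_sum_three_sq (by linarith) (by omega) (by omega)
      exact ⟨2 * u, 2 * v, 2 * w, by linear_combination 4 * huvw⟩
    · have hs := Int.even_iff.1 (Int.even_mul_succ_self s)
      have hsq : (2 * s + 1) ^ 2 = 4 * (s * (s + 1)) + 1 := by ring
      exact exists_sum_three_sq (by linarith) (by omega) (by omega)
  exact exists_sum_eq_sum_sq_eq (u := u) (v := v) (w := w) hab (by linarith)

end Cauchy

/-! ### Polygonal numbers -/

lemma two_mul_polygonal (m x : ℤ) : 2 * polygonal m x = (m - 2) * x ^ 2 - (m - 4) * x := by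
  refine Int.mul_ediv_cancel' ?_
  obtain ⟨k, hk⟩ := Int.even_mul_pred_self x
  exact ⟨m * k - x ^ 2 + 2 * x, by linear_combination m * hk⟩

lemma sum_mul_polygonal {ι : Type*} {s : Finset ι} {c x : ι → ℤ} {A B : ℤ} (m : ℤ)
    (hlin : ∑ i ∈ s, c i * x i = B) (hsq : ∑ i ∈ s, c i * x i ^ 2 = 2 * A + B) :
    ∑ i ∈ s, c i * polygonal m (x i) = A * (m - 2) + B := by
  refine mul_left_cancel₀ (two_ne_zero (α := ℤ)) ?_
  calc 2 * ∑ i ∈ s, c i * polygonal m (x i)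
      = ∑ i ∈ s, ((m - 2) * (c i * x i ^ 2) - (m - 4) * (c i * x i)) := by
        rw [Finset.mul_sum]
        exact Finset.sum_congr rfl fun i _ ↦ by linear_combination c i * two_mul_polygonal m (x i)
    _ = (m - 2) * (2 * A + B) - (m - 4) * B := by
        rw [Finset.sum_sub_distrib, ← Finset.mul_sum, ← Finset.mul_sum, hlin, hsq]
    _ = 2 * (A * (m - 2) + B) := by ring

theorem rep_11112_general (m A B : ℤ) (hA : 1 ≤ A) (hB : -1 ≤ B ∧ B ≤ 6) :
    ∃ x₁ x₂ x₃ x₄ x₅ : ℤ,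
      polygonal m x₁ + polygonal m x₂ + polygonal m x₃ + polygonal m x₄ +
        2 * polygonal m x₅ = A * (m - 2) + B := by
  obtain ⟨t, ht4, ht⟩ : ∃ t : ℤ, ¬ 4 ∣ 2 * A + B - 2 * t ^ 2 ∧
      (B - 2 * t) ^ 2 ≤ 4 * (2 * A + B - 2 * t ^ 2) := by
    obtain ⟨hB₁, hB₂⟩ := hB
    by_cases h4 : 4 ∣ 2 * A + B
    · exact ⟨1, by omega, by interval_cases B <;> omega⟩
    · exact ⟨0, by omega, by interval_cases B <;> omega⟩
  have hparity : Even (2 * A + B - 2 * t ^ 2 - (B - 2 * t)) := ⟨A - t ^ 2 + t, by ring⟩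
  obtain ⟨x₁, x₂, x₃, x₄, hlin, hsq⟩ := cauchy_sum_four_sq hparity ht4 ht
  refine ⟨x₁, x₂, x₃, x₄, t, ?_⟩
  let c : Fin 5 → ℤ := ![1, 1, 1, 1, 2]
  let x : Fin 5 → ℤ := ![x₁, x₂, x₃, x₄, t]
  have hlin' : ∑ i, c i * x i = B := by
    simp only [c, x, Fin.sum_univ_five, cons_val]
    linarith
  have hsq' : ∑ i, c i * x i ^ 2 = 2 * A + B := by
    simp only [c, x, Fin.sum_univ_five, cons_val]
    linarith
  simpa [c, x, Fin.sum_univ_five] using sum_mul_polygonal m hlin' hsq'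

theorem rep_11112 (m : ℤ) (hm : 9 ≤ m) (A B : ℤ) (hA : 1 ≤ A)
    (hB : -1 ≤ B ∧ B ≤ 6) (hpos : 0 < A * (m - 2) + B) :
    ∃ x₁ x₂ x₃ x₄ x₅ : ℤ,
      polygonal m x₁ + polygonal m x₂ + polygonal m x₃ + polygonal m x₄ +
        2 * polygonal m x₅ = A * (m - 2) + B :=
  rep_11112_general m A B hA hB
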